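/- arXiv:0908.1976 — 3 statements merged into one kernel-verified Lean document; each statement's English description precedes it below -/
import Mathlib

section
/- Let θ₁ = (b, σ₁) and θ₂ = (b', σ₂) be involutions in the hyperoctahedral group W(Bₙ). Then θ₁ and θ₂ are conjugate in W(Bₙ) if and only if σ₁ and σ₂ are conjugate in Perm(Fin n) and n_s(θ₁) = n_s(θ₂) (equivalently, n_r(θ₁) = n_r(θ₂)). In particular, the conjugacy class of an involution θ is uniquely determined by the pair of numbers (n_c(θ), n_s(θ)). -/
open Multiplicative

/-- The permutation action of `Equiv.Perm (Fin n)` on `Multiplicative (Fin n → ZMod 2)`,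
permuting coordinates. -/
def permAction (n : ℕ) :
    Equiv.Perm (Fin n) →* MulAut (Multiplicative (Fin n → ZMod 2)) where
  toFun σ :=
    { toFun := fun b => Multiplicative.ofAdd (fun i => Multiplicative.toAdd b (σ⁻¹ i))
      invFun := fun b => Multiplicative.ofAdd (fun i => Multiplicative.toAdd b (σ i))
      left_inv := by
        intro b
        simp
      right_inv := by
        intro b
        simp
      map_mul' := by
        intro a b
        rfl }
  map_one' := by
    apply MulEquiv.ext
    intro b
    simp
  map_mul' := by
    intro σ τ
    apply MulEquiv.ext
    intro b
    simp [mul_inv_rev, Equiv.Perm.mul_apply]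

/-- The hyperoctahedral group `W(Bₙ)` as the semidirect product
`(Fin n → ZMod 2) ⋊ Perm (Fin n)`. -/
abbrev HO (n : ℕ) :=
  Multiplicative (Fin n → ZMod 2) ⋊[permAction n] Equiv.Perm (Fin n)

/-- `n_s θ`: the number of indices fixed by the permutation part whose bit is `0`. -/
noncomputable def nsHO {n : ℕ} (θ : HO n) : ℕ :=
  Nat.card {i : Fin n // θ.right i = i ∧ Multiplicative.toAdd θ.left i = 0}

/-- `n_r θ`: the number of indices fixed by the permutation part whose bit is `1`. -/
noncomputable def nrHO {n : ℕ} (θ : HO n) : ℕ :=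
  Nat.card {i : Fin n // θ.right i = i ∧ Multiplicative.toAdd θ.left i = 1}

/-- `n_c θ`: the number of indices moved by the permutation part. -/
noncomputable def ncHO {n : ℕ} (θ : HO n) : ℕ :=
  Nat.card {i : Fin n // θ.right i ≠ i}

/-!
Conjugation by `g` moves the bit of `θ` at `i` to position `g.right i`, up to a correction by
`g.left` that vanishes when `θ.right` fixes `i`; hence `n_s` is a conjugacy invariant. Conversely,
three successive conjugations carry `θ₁` to `θ₂`: by a permutation making the permutation parts
equal, by a permutation of the common fixed points matching the bits there, and by an element of
`Fin n → ZMod 2` removing the difference of the bits on the 2-cycles, where it is a coboundary.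
-/

section Group

variable {G N : Type*} [Group G] [Group N] {k : ℕ}

theorem conj_pow_eq_one (g : G) {a : G} (h : a ^ k = 1) : (g * a * g⁻¹) ^ k = 1 := by
  rw [conj_pow, h, mul_one, mul_inv_cancel]

theorem semidirectProduct_right_pow_eq_one {φ : G →* MulAut N} {x : N ⋊[φ] G} (h : x ^ k = 1) :
    x.right ^ k = 1 :=
  (map_pow SemidirectProduct.rightHom x k).symm.trans (congrArg SemidirectProduct.right h)

end Group

section Perm

variable {α : Type*}

theorem isConj_iff_card_support_eq_of_pow_prime_eq_one [Fintype α] [DecidableEq α] {p : ℕ}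
    [Fact p.Prime] {σ τ : Equiv.Perm α} (hσ : σ ^ p = 1) (hτ : τ ^ p = 1) :
    IsConj σ τ ↔ σ.support.card = τ.support.card := by
  have hp : 0 < p := (Fact.out : p.Prime).pos
  have cycleType_eq {π : Equiv.Perm α} (hπ : π ^ p = 1) :
      π.cycleType = Multiset.replicate π.cycleType.card p :=
    Multiset.eq_replicate_card.2 (Equiv.Perm.pow_prime_eq_one_iff.1 hπ)
  have card_support_eq {π : Equiv.Perm α} (hπ : π ^ p = 1) :
      π.support.card = π.cycleType.card * p := by
    rw [← π.sum_cycleType, cycleType_eq hπ, Multiset.sum_replicate, Multiset.card_replicate,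
      smul_eq_mul]
  rw [Equiv.Perm.isConj_iff_cycleType_eq, card_support_eq hσ, card_support_eq hτ,
    Nat.mul_left_inj hp.ne']
  exact ⟨congrArg _, fun h ↦ by rw [cycleType_eq hσ, cycleType_eq hτ, h]⟩

theorem exists_perm_iff_of_card_eq [Finite α] {p q : α → Prop}
    (h : Nat.card {a // p a} = Nat.card {a // q a}) :
    ∃ ρ : Equiv.Perm α, ∀ a, q (ρ a) ↔ p a := by
  classical
  have := Fintype.ofFinite α
  obtain ⟨e⟩ := Finite.card_eq.1 h
  exact ⟨e.extendSubtype, fun a ↦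
    ⟨not_imp_not.1 (e.extendSubtype_not_mem a), e.extendSubtype_mem a⟩⟩

theorem exists_commute_perm_iff_of_card_fixed_eq [Finite α] {σ : Equiv.Perm α} {p q : α → Prop}
    (h : Nat.card {a // σ a = a ∧ p a} = Nat.card {a // σ a = a ∧ q a}) :
    ∃ ρ : Equiv.Perm α, Commute ρ σ ∧ ∀ a, σ a = a → (q (ρ a) ↔ p a) := by
  classical
  have hfixed : Nat.card {a : {a // σ a = a} // p a} = Nat.card {a : {a // σ a = a} // q a} := by
    rwa [Nat.card_congr (Equiv.subtypeSubtypeEquivSubtypeInter _ p),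
      Nat.card_congr (Equiv.subtypeSubtypeEquivSubtypeInter _ q)]
  obtain ⟨ρ, hρ⟩ := exists_perm_iff_of_card_eq hfixed
  have hdisj : (Equiv.Perm.ofSubtype ρ).Disjoint σ := fun a ↦
    (em (σ a = a)).symm.imp_left (Equiv.Perm.ofSubtype_apply_of_not_mem ρ)
  refine ⟨Equiv.Perm.ofSubtype ρ, hdisj.commute, fun a ha ↦ ?_⟩
  rw [Equiv.Perm.ofSubtype_apply_of_mem ρ ha]
  exact hρ ⟨a, ha⟩

theorem exists_sub_comp_eq_of_comp_eq_neg {A : Type*} [AddGroup A] {σ : α → α}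
    (hσ : Function.Involutive σ) {d : α → A} (hneg : ∀ a, d (σ a) = -d a)
    (hfixed : ∀ a, σ a = a → d a = 0) : ∃ c : α → A, ∀ a, c a - c (σ a) = d a := by
  obtain ⟨_, -⟩ := exists_wellFoundedLT α
  -- On each 2-cycle, all of `d` is put on the smaller point.
  refine ⟨fun a ↦ if a < σ a then d a else 0, fun a ↦ ?_⟩
  rcases lt_trichotomy a (σ a) with hlt | heq | hgt
  · simp [hσ a, hlt, hlt.not_gt]
  · simp [← heq, hfixed a heq.symm]
  · simp [hσ a, hgt, hgt.not_gt, hneg]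

end Perm

namespace HO

variable {n : ℕ} {θ θ₁ θ₂ : HO n}

theorem toAdd_permAction_apply (σ : Equiv.Perm (Fin n)) (b : Multiplicative (Fin n → ZMod 2))
    (i : Fin n) : toAdd (permAction n σ b) i = toAdd b (σ⁻¹ i) :=
  rfl

theorem toAdd_left_conj_apply (g θ : HO n) (i : Fin n) :
    toAdd (g * θ * g⁻¹).left (g.right i) =
      toAdd g.left (g.right i) + toAdd θ.left i - toAdd g.left (g.right (θ.right⁻¹ i)) := by
  simp only [SemidirectProduct.mul_left, SemidirectProduct.mul_right, SemidirectProduct.inv_left,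
    toAdd_mul, toAdd_inv, Pi.add_apply, Pi.neg_apply, toAdd_permAction_apply, mul_inv_rev, inv_inv,
    Equiv.Perm.mul_apply, Equiv.Perm.coe_inv, Equiv.symm_apply_apply, sub_eq_add_neg]

theorem right_conj_apply (g θ : HO n) (i : Fin n) :
    (g * θ * g⁻¹).right (g.right i) = g.right (θ.right i) := by
  simp

theorem toAdd_left_conj_apply_of_fixed (g : HO n) {i : Fin n} (hi : θ.right i = i) :
    toAdd (g * θ * g⁻¹).left (g.right i) = toAdd θ.left i := by
  rw [toAdd_left_conj_apply, Equiv.Perm.inv_eq_iff_eq.2 hi.symm, add_sub_cancel_left]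

theorem nsHO_conj (g θ : HO n) : nsHO (g * θ * g⁻¹) = nsHO θ := by
  refine (Nat.card_congr (g.right.subtypeEquiv fun i ↦ ?_)).symm
  rw [right_conj_apply, g.right.injective.eq_iff]
  exact and_congr_right fun hi ↦ by rw [toAdd_left_conj_apply_of_fixed g hi]

theorem nsHO_eq_of_isConj (h : IsConj θ₁ θ₂) : nsHO θ₁ = nsHO θ₂ := by
  obtain ⟨g, rfl⟩ := isConj_iff.1 h
  exact (nsHO_conj g θ₁).symm

theorem ncHO_eq_card_support (θ : HO n) : ncHO θ = θ.right.support.card := by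
  rw [ncHO, Nat.card_eq_fintype_card, Fintype.card_subtype]
  rfl

theorem right_involutive (hθ : θ ^ 2 = 1) : Function.Involutive θ.right := fun i ↦ by
  rw [← Equiv.Perm.mul_apply, ← sq, semidirectProduct_right_pow_eq_one hθ, Equiv.Perm.one_apply]

theorem toAdd_left_right_apply_eq_neg (hθ : θ ^ 2 = 1) (i : Fin n) :
    toAdd θ.left (θ.right i) = -toAdd θ.left i := by
  have hleft : (θ * θ).left = 1 := by rw [← sq, hθ, SemidirectProduct.one_left]
  have hsum : toAdd θ.left (θ.right i) + toAdd θ.left i = 0 := by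
    simpa [toAdd_permAction_apply] using congrFun (congrArg toAdd hleft) (θ.right i)
  exact eq_neg_of_add_eq_zero_left hsum

theorem isConj_of_right_eq_of_left_eq_on_fixed (hθ₁ : θ₁ ^ 2 = 1) (hθ₂ : θ₂ ^ 2 = 1)
    (hright : θ₁.right = θ₂.right)
    (hleft : ∀ i, θ₁.right i = i → toAdd θ₁.left i = toAdd θ₂.left i) : IsConj θ₁ θ₂ := by
  have hinv : θ₁.right⁻¹ = θ₁.right :=
    inv_eq_of_mul_eq_one_left ((sq _).symm.trans (semidirectProduct_right_pow_eq_one hθ₁))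
  let d : Fin n → ZMod 2 := toAdd θ₂.left - toAdd θ₁.left
  have hneg (i : Fin n) : d (θ₁.right i) = -d i := by
    have h₂ : toAdd θ₂.left (θ₁.right i) = -toAdd θ₂.left i :=
      hright ▸ toAdd_left_right_apply_eq_neg hθ₂ i
    simp only [d, Pi.sub_apply, h₂, toAdd_left_right_apply_eq_neg hθ₁]
    abel
  obtain ⟨c, hc⟩ := exists_sub_comp_eq_of_comp_eq_neg (right_involutive hθ₁) hneg
    fun i hi ↦ sub_eq_zero.2 (hleft i hi).symm
  let g : HO n := SemidirectProduct.inl (ofAdd c)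
  refine isConj_iff.2 ⟨g, SemidirectProduct.ext ?_ ?_⟩
  · refine toAdd.injective (funext fun i ↦ ?_)
    calc toAdd (g * θ₁ * g⁻¹).left i
        = c i + toAdd θ₁.left i - c (θ₁.right⁻¹ i) := toAdd_left_conj_apply g θ₁ i
      _ = (c i - c (θ₁.right i)) + toAdd θ₁.left i := by rw [hinv]; abel
      _ = toAdd θ₂.left i := by rw [hc]; exact sub_add_cancel _ _
  · simpa [g] using hright

theorem isConj_of_right_eq_of_nsHO_eq (hθ₁ : θ₁ ^ 2 = 1) (hθ₂ : θ₂ ^ 2 = 1)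
    (hright : θ₁.right = θ₂.right) (hns : nsHO θ₁ = nsHO θ₂) : IsConj θ₁ θ₂ := by
  have hcard : Nat.card {i // θ₁.right i = i ∧ toAdd θ₁.left i = 0} =
      Nat.card {i // θ₁.right i = i ∧ toAdd θ₂.left i = 0} := by
    simpa only [nsHO, hright] using hns
  obtain ⟨ρ, hcomm, hzero⟩ := exists_commute_perm_iff_of_card_fixed_eq hcard
  let g : HO n := SemidirectProduct.inr ρ
  have hright' : (g * θ₁ * g⁻¹).right = θ₁.right := hcomm.mul_inv_cancel
  refine (isConj_iff.2 ⟨g, rfl⟩).trans (isConj_of_right_eq_of_left_eq_on_fixed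
    (conj_pow_eq_one g hθ₁) hθ₂ (hright'.trans hright) fun j hj ↦ ?_)
  obtain ⟨i, rfl⟩ := ρ.surjective j
  have hi : θ₁.right i = i := ρ.injective ((right_conj_apply g θ₁ i).symm.trans hj)
  have eq_of_zero_iff : ∀ x y : ZMod 2, (y = 0 ↔ x = 0) → x = y := by decide
  exact (toAdd_left_conj_apply_of_fixed g hi).trans (eq_of_zero_iff _ _ (hzero i hi))

theorem isConj_of_isConj_right_of_nsHO_eq (hθ₁ : θ₁ ^ 2 = 1) (hθ₂ : θ₂ ^ 2 = 1)
    (hright : IsConj θ₁.right θ₂.right) (hns : nsHO θ₁ = nsHO θ₂) : IsConj θ₁ θ₂ := by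
  obtain ⟨τ, hτ⟩ := isConj_iff.1 hright
  let g : HO n := SemidirectProduct.inr τ
  exact (isConj_iff.2 ⟨g, rfl⟩).trans (isConj_of_right_eq_of_nsHO_eq (conj_pow_eq_one g hθ₁) hθ₂ hτ
    ((nsHO_conj g θ₁).trans hns))

end HO

/-- Two involutions `θ₁ = (b, σ₁)` and `θ₂ = (b', σ₂)` of the hyperoctahedral group
`W(Bₙ)` are conjugate if and only if `σ₁` and `σ₂` are conjugate in `Perm (Fin n)`
and `n_s θ₁ = n_s θ₂`.  In particular, the conjugacy class of an involution `θ` is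
uniquely determined by the pair `(n_c θ, n_s θ)`. -/
theorem involution_isConj_iff (n : ℕ) (hn : 0 < n) (θ₁ θ₂ : HO n)
    (hθ₁ : θ₁ ^ 2 = 1) (hθ₂ : θ₂ ^ 2 = 1) :
    (IsConj θ₁ θ₂ ↔ IsConj θ₁.right θ₂.right ∧ nsHO θ₁ = nsHO θ₂) ∧
    (IsConj θ₁ θ₂ ↔ ncHO θ₁ = ncHO θ₂ ∧ nsHO θ₁ = nsHO θ₂) := by
  have hright : IsConj θ₁.right θ₂.right ↔ ncHO θ₁ = ncHO θ₂ := by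
    rw [HO.ncHO_eq_card_support, HO.ncHO_eq_card_support]
    exact isConj_iff_card_support_eq_of_pow_prime_eq_one (semidirectProduct_right_pow_eq_one hθ₁)
      (semidirectProduct_right_pow_eq_one hθ₂)
  have hconj : IsConj θ₁ θ₂ ↔ IsConj θ₁.right θ₂.right ∧ nsHO θ₁ = nsHO θ₂ :=
    ⟨fun h ↦ ⟨SemidirectProduct.rightHom.map_isConj h, HO.nsHO_eq_of_isConj h⟩,
      fun ⟨hr, hns⟩ ↦ HO.isConj_of_isConj_right_of_nsHO_eq hθ₁ hθ₂ hr hns⟩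
  exact ⟨hconj, hconj.trans (and_congr_left' hright)⟩
end

section
/- Let θ be an involution in the hyperoctahedral group W(Bₙ), and set n_c = n_c(θ) (an even number, n_c = 2k) and n_s = n_s(θ). Then the number of involutions in W(Bₙ) conjugate to θ equals (n! / ((n − n_c)! · k!)) · C(n − n_c, n_s), where C denotes the binomial coefficient. -/
open Multiplicative

/-!
Conjugating `(b, σ)` by `(c, 1)` replaces `b` by `b + c - c ∘ σ⁻¹`. For an involution, `b` is
constant on each 2-cycle of `σ`, and such a change can alter `b` arbitrarily there (subject to this
constancy) but not at the fixed points. Hence the class of `(b, σ)` is determined by the cycle type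
of `σ` and the number of zeros of `b` among the fixed points. The class is then counted over the
permutations of cycle type `2ᵏ`: there are `n! / ((n - 2k)! 2ᵏ k!)` of them, and over each one `b`
amounts to a choice of `n_s` zeros among the `n - 2k` fixed points and of one bit for each of the
`k` cycles; the factors `2ᵏ` cancel.
-/

open Equiv.Perm Function

section Perm

variable {α β : Type*}

theorem exists_add_comp_eq_of_involutive [AddZeroClass β] {σ : α → α} (hσ : Involutive σ)
    {d : α → β} (hd : d ∘ σ = d) (hd_fixed : ∀ i, σ i = i → d i = 0) :
    ∃ c : α → β, ∀ i, c i + c (σ i) = d i := by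
  classical
  let : LinearOrder α := linearOrderOfSTO WellOrderingRel
  -- Each two-element orbit has exactly one point `i` with `i < σ i`; it carries the whole of `d`.
  refine ⟨fun i => if i < σ i then d i else 0, fun i => ?_⟩
  have hd_apply : d (σ i) = d i := congrFun hd i
  rcases lt_trichotomy i (σ i) with h | h | h
  · simp [h, h.not_gt, hσ i]
  · simp [← h, hd_fixed i h.symm]
  · simp [h, h.not_gt, hσ i, hd_apply]

theorem apply_eq_of_sameCycle {σ : Equiv.Perm α} {f : α → β} (hf : f ∘ σ = f) {x y : α}
    (hxy : σ.SameCycle x y) : f x = f y := by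
  have h_pow (m : ℕ) (z : α) : f ((σ ^ m) z) = f z := by
    have h_semiconj : Semiconj f σ id := congrFun hf
    simpa [iterate_eq_pow] using h_semiconj.iterate_right m z
  obtain ⟨m | m, rfl⟩ := hxy
  · exact (h_pow m x).symm
  · simpa [zpow_negSucc] using h_pow (m + 1) ((σ ^ (m + 1))⁻¹ x)

theorem natCard_zmod_two_fun_card_zeros_eq [Finite α] (s : ℕ) :
    Nat.card {f : α → ZMod 2 // Nat.card {x // f x = 0} = s} = (Nat.card α).choose s := by
  classical
  have := Fintype.ofFinite α
  have h_eq_zero (p : Prop) [Decidable p] : (if p then (0 : ZMod 2) else 1) = 0 ↔ p := by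
    split_ifs <;> simp [*]
  have h_ite (x : ZMod 2) : (if x = 0 then 0 else 1) = x := by decide +revert
  let zeros : (α → ZMod 2) ≃ Finset α :=
    { toFun := fun f => {x | f x = 0}
      invFun := fun S x => if x ∈ S then 0 else 1
      left_inv := fun f => by simp [h_ite]
      right_inv := fun S => by simp [h_eq_zero] }
  have h_card (f : α → ZMod 2) : Nat.card {x // f x = 0} = s ↔ (zeros f).card = s := by
    rw [Nat.card_eq_fintype_card, Fintype.card_subtype]; rfl
  rw [Nat.card_congr (zeros.subtypeEquiv (q := fun S => S.card = s) h_card),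
    Nat.card_eq_fintype_card, Fintype.card_finset_len, Nat.card_eq_fintype_card]

theorem exists_commute_forall_fixed_iff [Finite α] (σ : Equiv.Perm α) {p q : α → Prop}
    (h : Nat.card {i // σ i = i ∧ p i} = Nat.card {i // σ i = i ∧ q i}) :
    ∃ u : Equiv.Perm α, Commute u σ ∧ ∀ i, σ i = i → (q (u i) ↔ p i) := by
  classical
  have := Fintype.ofFinite α
  let restrict (r : α → Prop) : {x : fixedPoints σ // r x} ≃ {i // σ i = i ∧ r i} :=
    Equiv.subtypeSubtypeEquivSubtypeInter _ r
  let e : {x : fixedPoints σ // p x} ≃ {x : fixedPoints σ // q x} :=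
    (restrict p).trans ((Finite.card_eq.1 h).some.trans (restrict q).symm)
  refine ⟨ofSubtype e.extendSubtype,
    (disjoint_ofSubtype_of_memFixedPoints_self e.extendSubtype).commute, fun i hi => ?_⟩
  rw [ofSubtype_apply_of_mem (p := (· ∈ fixedPoints σ)) _ hi]
  by_cases hp : p i
  · exact iff_of_true (e.extendSubtype_mem ⟨i, hi⟩ hp) hp
  · exact iff_of_false (e.extendSubtype_not_mem ⟨i, hi⟩ hp) hp

variable [DecidableEq α] [Fintype α]

theorem cycleType_eq_replicate_iff {σ : Equiv.Perm α} {p : ℕ} [Fact p.Prime] {k : ℕ} :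
    σ.cycleType = Multiset.replicate k p ↔ σ ^ p = 1 ∧ σ.support.card = k * p := by
  rw [Multiset.eq_replicate, ← pow_prime_eq_one_iff, and_comm]
  refine and_congr_right fun hσ => ?_
  have hsum := σ.sum_cycleType
  rw [cycleType_of_pow_prime_eq_one hσ, Multiset.sum_replicate, smul_eq_mul] at hsum
  rw [← hsum, Nat.mul_left_inj (Fact.out (p := p.Prime)).ne_zero]

theorem natCard_cycleType_eq_replicate_mul {m : ℕ} (hm : 2 ≤ m) {k : ℕ}
    (hk : k * m ≤ Fintype.card α) :
    Nat.card {σ : Equiv.Perm α // σ.cycleType = Multiset.replicate k m} *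
        ((Fintype.card α - k * m).factorial * m ^ k * k.factorial) =
      (Fintype.card α).factorial := by
  have hcount := card_of_cycleType_mul_eq α (Multiset.replicate k m)
  have hprod : ∏ a ∈ (Multiset.replicate k m).toFinset,
      ((Multiset.replicate k m).count a).factorial = k.factorial := by
    rcases eq_or_ne k 0 with rfl | hk
    · simp
    · simp [Multiset.toFinset_replicate, hk]
  rw [hprod, Multiset.sum_replicate, Multiset.prod_replicate, smul_eq_mul,
    if_pos ⟨hk, fun a ha => (Multiset.eq_of_mem_replicate ha).ge.trans' hm⟩] at hcount
  rwa [Nat.card_eq_fintype_card, Fintype.card_subtype]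

theorem exists_conj_eq_forall_fixed_iff {σ τ : Equiv.Perm α} (hστ : σ.cycleType = τ.cycleType)
    {p q : α → Prop}
    (h : Nat.card {i // σ i = i ∧ p i} = Nat.card {i // τ i = i ∧ q i}) :
    ∃ π : Equiv.Perm α, π * σ * π⁻¹ = τ ∧ ∀ i, σ i = i → (q (π i) ↔ p i) := by
  obtain ⟨ρ, rfl⟩ := isConj_iff.1 (isConj_iff_cycleType_eq.2 hστ)
  have h_fixed (i : α) : (ρ * σ * ρ⁻¹) (ρ i) = ρ i ↔ σ i = i := by simp
  have h_transport : Nat.card {i // σ i = i ∧ p i} =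
      Nat.card {j // (ρ * σ * ρ⁻¹) j = j ∧ p (ρ⁻¹ j)} :=
    Nat.card_congr (ρ.subtypeEquiv fun i => by simp)
  obtain ⟨u, hu, hpq⟩ := exists_commute_forall_fixed_iff _ (h_transport.symm.trans h)
  refine ⟨u * ρ, ?_, fun i hi => ?_⟩
  · rw [mul_inv_rev, ← hu.mul_inv_cancel]
    group
  · simpa using hpq (ρ i) ((h_fixed i).2 hi)

/-- A function invariant under `σ` is determined by its values at the fixed points of `σ` and
its (constant) values on the nontrivial cycles of `σ`, all of which can be prescribed. The value
on a cycle is read off at a base point chosen by `Equiv.Perm.Basis`. -/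
noncomputable def invariantFunEquiv (σ : Equiv.Perm α) (β : Type*) :
    {f : α → β // f ∘ σ = f} ≃ (fixedPoints σ → β) × (σ.cycleFactorsFinset → β) :=
  let a : Basis σ := (Basis.nonempty σ).some
  { toFun := fun f => (fun x => f.1 x, fun c => f.1 (a c))
    invFun := fun g =>
      ⟨fun i => if hi : σ i = i then g.1 ⟨i, hi⟩
        else g.2 ⟨σ.cycleOf i, cycleOf_mem_cycleFactorsFinset_iff.2 (mem_support.2 hi)⟩, by
        funext i
        by_cases hi : σ i = i
        · simp [hi]
        · simp [hi, cycleOf_self_apply]⟩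
    left_inv := fun f => by
      ext i
      by_cases hi : σ i = i
      · simp [hi]
      · simpa [hi] using apply_eq_of_sameCycle f.2 (a.sameCycle _)
    right_inv := fun g => by
      refine Prod.ext (funext fun x => ?_) (funext fun c => ?_)
      · simp [show σ x = x from x.2]
      · have hc : σ (a c) ≠ a c :=
          mem_support.1 (mem_cycleFactorsFinset_support_le c.2 (a.mem_support_self c))
        simp [hc, a.cycleOf_eq] }

theorem natCard_invariant_zmod_two_fun_card_zeros_eq (σ : Equiv.Perm α) (s : ℕ) :
    Nat.card {f : α → ZMod 2 // f ∘ σ = f ∧ Nat.card {i // σ i = i ∧ f i = 0} = s} =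
      (Fintype.card α - σ.cycleType.sum).choose s * 2 ^ σ.cycleType.card := by
  have h_zeros (f : {f : α → ZMod 2 // f ∘ σ = f}) :
      Nat.card {i // σ i = i ∧ f.1 i = 0} = s ↔
        Nat.card {x // (invariantFunEquiv σ (ZMod 2) f).1 x = 0} = s := by
    rw [Nat.card_congr (Equiv.subtypeSubtypeEquivSubtypeInter (fun i => σ i = i) _).symm]
    rfl
  let zeroSplit : {f : α → ZMod 2 // f ∘ σ = f ∧ Nat.card {i // σ i = i ∧ f i = 0} = s} ≃
      {g : fixedPoints σ → ZMod 2 // Nat.card {x // g x = 0} = s} ×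
        (σ.cycleFactorsFinset → ZMod 2) :=
    (Equiv.subtypeSubtypeEquivSubtypeInter (fun f : α → ZMod 2 => f ∘ σ = f) _).symm.trans
      (((invariantFunEquiv σ (ZMod 2)).subtypeEquiv h_zeros).trans
        (Equiv.prodSubtypeFstEquivSubtypeProd
          (p := fun g : fixedPoints σ → ZMod 2 => Nat.card {x // g x = 0} = s)))
  rw [Nat.card_congr zeroSplit, Nat.card_prod, natCard_zmod_two_fun_card_zeros_eq,
    Nat.card_eq_fintype_card, card_fixedPoints, Nat.card_fun, Nat.card_zmod,
    Nat.card_eq_finsetCard, cycleType_def, Multiset.card_map, Finset.card_val]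

end Perm

section HO

variable {n : ℕ} {θ τ : HO n}

theorem toAdd_permAction_apply (σ : Equiv.Perm (Fin n)) (b : Multiplicative (Fin n → ZMod 2))
    (i : Fin n) : toAdd (permAction n σ b) i = toAdd b (σ⁻¹ i) := rfl

theorem ncHO_eq_card_support (θ : HO n) : ncHO θ = θ.right.support.card := by
  rw [ncHO, Nat.card_eq_fintype_card, Fintype.card_subtype]
  rfl

theorem sq_eq_one_iff_right_left_invariant :
    θ ^ 2 = 1 ↔ θ.right ^ 2 = 1 ∧ toAdd θ.left ∘ θ.right = toAdd θ.left := by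
  have h_left : (θ ^ 2).left = 1 ↔ toAdd θ.left ∘ θ.right = toAdd θ.left := by
    rw [sq, ← toAdd.injective.eq_iff, funext_iff, funext_iff, ← θ.right.forall_congr_right]
    refine forall_congr' fun i => ?_
    simp [toAdd_permAction_apply, CharTwo.add_eq_zero]
  rw [SemidirectProduct.ext_iff, and_comm, SemidirectProduct.one_left, h_left, sq, sq]
  rfl

theorem toAdd_conj_left_apply (g θ : HO n) (i : Fin n) :
    toAdd (g * θ * g⁻¹).left (g.right i) =
      toAdd g.left (g.right i) + toAdd θ.left i - toAdd g.left (g.right (θ.right⁻¹ i)) := by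
  simp only [SemidirectProduct.mul_left, SemidirectProduct.mul_right, SemidirectProduct.inv_left,
    toAdd_mul, toAdd_inv, toAdd_permAction_apply, Pi.add_apply, Pi.neg_apply, mul_inv_rev,
    Equiv.Perm.mul_apply, inv_inv, Equiv.Perm.coe_inv, Equiv.symm_apply_apply, sub_eq_add_neg]

theorem isConj_iff_exists_perm :
    IsConj θ τ ↔ ∃ (π : Equiv.Perm (Fin n)) (c : Fin n → ZMod 2), π * θ.right * π⁻¹ = τ.right ∧
      ∀ i, toAdd τ.left (π i) = c i + toAdd θ.left i - c (θ.right⁻¹ i) := by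
  rw [isConj_iff]
  constructor
  · rintro ⟨g, rfl⟩
    exact ⟨g.right, toAdd g.left ∘ g.right, rfl, toAdd_conj_left_apply g θ⟩
  · rintro ⟨π, c, h_right, h_left⟩
    let g : HO n := ⟨ofAdd (c ∘ ⇑π⁻¹), π⟩
    refine ⟨g, SemidirectProduct.ext (toAdd.injective (funext fun j => ?_)) h_right⟩
    obtain ⟨i, rfl⟩ := π.surjective j
    rw [h_left]
    simpa [g] using toAdd_conj_left_apply g θ i

theorem nsHO_eq_of_isConj (h : IsConj θ τ) : nsHO τ = nsHO θ := by
  obtain ⟨π, c, h_right, h_left⟩ := isConj_iff_exists_perm.1 h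
  refine (Nat.card_congr (π.subtypeEquiv fun i => ?_)).symm
  have h_fixed : θ.right i = i ↔ τ.right (π i) = π i := by simp [← h_right]
  have h_bit (hi : θ.right i = i) : toAdd τ.left (π i) = toAdd θ.left i := by
    rw [h_left, Equiv.Perm.inv_eq_iff_eq.2 hi.symm, add_sub_cancel_left]
  rw [← h_fixed]
  exact and_congr_right fun hi => by rw [h_bit hi]

theorem isConj_of_cycleType_eq_of_nsHO_eq (hθ : θ ^ 2 = 1) (hτ : τ ^ 2 = 1)
    (h_cycle : θ.right.cycleType = τ.right.cycleType) (hns : nsHO θ = nsHO τ) :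
    IsConj θ τ := by
  rw [sq_eq_one_iff_right_left_invariant] at hθ hτ
  obtain ⟨π, hπ, h_zero⟩ := exists_conj_eq_forall_fixed_iff h_cycle hns
  have hπ_apply (i : Fin n) : π (θ.right i) = τ.right (π i) := by simp [← hπ]
  have h_inv : θ.right⁻¹ = θ.right := inv_eq_of_mul_eq_one_left (by rw [← sq, hθ.1])
  have h_involutive : Involutive θ.right := fun i => by
    rw [← Equiv.Perm.mul_apply, ← sq, hθ.1, Equiv.Perm.one_apply]
  let d : Fin n → ZMod 2 := fun i => toAdd τ.left (π i) - toAdd θ.left i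
  have hd : d ∘ θ.right = d := funext fun i => by
    simp only [d, comp_apply, hπ_apply]
    exact congrArg₂ (· - ·) (congrFun hτ.2 (π i)) (congrFun hθ.2 i)
  have hd_fixed (i : Fin n) (hi : θ.right i = i) : d i = 0 := by
    have h_eq (x y : ZMod 2) : (x = 0 ↔ y = 0) → x - y = 0 := by decide +revert
    exact h_eq _ _ (h_zero i hi)
  obtain ⟨c, hc⟩ := exists_add_comp_eq_of_involutive h_involutive hd hd_fixed
  refine isConj_iff_exists_perm.2 ⟨π, c, hπ, fun i => ?_⟩
  rw [h_inv, CharTwo.sub_eq_add, add_right_comm, hc, sub_add_cancel]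

theorem isConj_iff_of_sq_eq_one (hθ : θ ^ 2 = 1) :
    IsConj θ τ ↔ τ.right.cycleType = θ.right.cycleType ∧
      toAdd τ.left ∘ τ.right = toAdd τ.left ∧ nsHO τ = nsHO θ := by
  constructor
  · intro h
    have hns := nsHO_eq_of_isConj h
    obtain ⟨g, rfl⟩ := isConj_iff.1 h
    have h_sq : (g * θ * g⁻¹) ^ 2 = 1 := by rw [conj_pow, hθ, mul_one, mul_inv_cancel]
    exact ⟨cycleType_conj, (sq_eq_one_iff_right_left_invariant.1 h_sq).2, hns⟩
  · rintro ⟨h_cycle, h_inv, hns⟩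
    have h_sq : τ.right ^ 2 = 1 := by
      rw [pow_prime_eq_one_iff, h_cycle, ← pow_prime_eq_one_iff]
      exact (sq_eq_one_iff_right_left_invariant.1 hθ).1
    have hτ : τ ^ 2 = 1 := sq_eq_one_iff_right_left_invariant.2 ⟨h_sq, h_inv⟩
    exact isConj_of_cycleType_eq_of_nsHO_eq hθ hτ h_cycle.symm hns.symm

theorem natCard_cycleType_eq_invariant_nsHO_eq (n : ℕ) (m : Multiset ℕ) (s : ℕ) :
    Nat.card {τ : HO n // τ.right.cycleType = m ∧
      toAdd τ.left ∘ τ.right = toAdd τ.left ∧ nsHO τ = s} =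
    Nat.card {σ : Equiv.Perm (Fin n) // σ.cycleType = m} *
      ((n - m.sum).choose s * 2 ^ m.card) := by
  let fiberwise : {τ : HO n // τ.right.cycleType = m ∧
      toAdd τ.left ∘ τ.right = toAdd τ.left ∧ nsHO τ = s} ≃
      Σ σ : {σ : Equiv.Perm (Fin n) // σ.cycleType = m}, {b : Fin n → ZMod 2 //
        b ∘ σ.1 = b ∧ Nat.card {i // σ.1 i = i ∧ b i = 0} = s} :=
    { toFun := fun τ => ⟨⟨τ.1.right, τ.2.1⟩, ⟨toAdd τ.1.left, τ.2.2⟩⟩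
      invFun := fun x => ⟨⟨ofAdd x.2.1, x.1.1⟩, x.1.2, x.2.2⟩
      left_inv := fun _ => rfl
      right_inv := fun _ => rfl }
  have h_fiber (σ : {σ : Equiv.Perm (Fin n) // σ.cycleType = m}) :
      Nat.card {b : Fin n → ZMod 2 // b ∘ σ.1 = b ∧ Nat.card {i // σ.1 i = i ∧ b i = 0} = s} =
        (n - m.sum).choose s * 2 ^ m.card := by
    rw [natCard_invariant_zmod_two_fun_card_zeros_eq, σ.2, Fintype.card_fin]
  rw [Nat.card_congr fiberwise, Nat.card_sigma, Finset.sum_congr rfl fun σ _ => h_fiber σ,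
    Finset.sum_const, Finset.card_univ, smul_eq_mul, Nat.card_eq_fintype_card]

end HO

/-- If `θ` is an involution in the hyperoctahedral group `W(Bₙ)` with `n_c θ = 2k`,
then the number of involutions conjugate to `θ` equals
`(n! / ((n − n_c θ)! · k!)) · C(n − n_c θ, n_s θ)`. -/
theorem card_conjugates_of_involution (n : ℕ) (hn : 0 < n) (θ : HO n)
    (hθ : θ ^ 2 = 1) (k : ℕ) (hk : ncHO θ = 2 * k) :
    Nat.card {τ : HO n // IsConj θ τ} =
      Nat.factorial n / (Nat.factorial (n - ncHO θ) * Nat.factorial k) *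
        Nat.choose (n - ncHO θ) (nsHO θ) := by
  have h_support : θ.right.support.card = k * 2 := by
    rw [← ncHO_eq_card_support, hk, mul_comm]
  have h_cycle : θ.right.cycleType = Multiset.replicate k 2 :=
    cycleType_eq_replicate_iff.2 ⟨(sq_eq_one_iff_right_left_invariant.1 hθ).1, h_support⟩
  have h_class : Nat.card {τ : HO n // IsConj θ τ} =
      Nat.card {σ : Equiv.Perm (Fin n) // σ.cycleType = Multiset.replicate k 2} *
        ((n - k * 2).choose (nsHO θ) * 2 ^ k) := by
    simp only [isConj_iff_of_sq_eq_one hθ, h_cycle, natCard_cycleType_eq_invariant_nsHO_eq,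
      Multiset.sum_replicate, Multiset.card_replicate, smul_eq_mul]
  have h_perm := natCard_cycleType_eq_replicate_mul le_rfl
    (h_support ▸ θ.right.support.card_le_univ)
  rw [Fintype.card_fin] at h_perm
  have h_div : n.factorial / ((n - k * 2).factorial * k.factorial) =
      Nat.card {σ : Equiv.Perm (Fin n) // σ.cycleType = Multiset.replicate k 2} * 2 ^ k :=
    Nat.div_eq_of_eq_mul_left (by positivity) (by rw [← h_perm]; ring)
  rw [h_class, hk, mul_comm 2 k, h_div]
  ring
end

section
/- Let θ ∈ W be an involution with imaginary roots Δ_i = {α ∈ Δ : θα = α}, let ε be a grading of Δ_i, and let φ ∈ ℝⁿ be regular. Set ρ_i(φ) = (1/2)·∑_{α ∈ Δ_i, ⟪α,φ⟫ > 0} α and ρ_{ic}(φ) = (1/2)·∑_{α ∈ Δ_i, ε(α)=0, ⟪α,φ⟫ > 0} α. Then for every root α ∈ Δ, both ρ_i(φ) − ρ_i(s_α φ) and ρ_{ic}(φ) − ρ_{ic}(s_α φ) lie in the ℤ-span of Δ (i.e. each is an integral linear combination of roots). -/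
/-!
For a finite set `S = -S` of vectors and functionals `f`, `g` vanishing nowhere on `S`, write `S_f`
for the set of `f`-positive elements. Then `S_g \ S_f = -(S_f \ S_g)`, so the half-sums of `S_f`
and `S_g` differ by the sum of `S_f \ S_g`, with no factor `1 / 2` left. This applies to the
imaginary and to the compact imaginary roots, since `s_α φ` is again regular: `s_α` is a
self-adjoint isometry preserving `ℤⁿ`, and `Δ` consists of the vectors of `ℤⁿ` whose squared length
is `1` or `2`.
-/

open scoped RealInnerProductSpace

noncomputable section

/-- Euclidean space `ℝⁿ`. -/
abbrev EucB (n : ℕ) := EuclideanSpace ℝ (Fin n)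

/-- The `i`-th standard basis vector of `ℝⁿ`. -/
def eB (n : ℕ) (i : Fin n) : EucB n := EuclideanSpace.single i (1 : ℝ)

/-- The root system `Δ` of type `Bₙ`:
`{±eᵢ ± eⱼ : i < j} ∪ {±eᵢ}`. -/
def DeltaB (n : ℕ) : Set (EucB n) :=
  {v | (∃ i j : Fin n, i < j ∧
          (v = eB n i + eB n j ∨ v = eB n i - eB n j ∨
           v = -eB n i + eB n j ∨ v = -eB n i - eB n j)) ∨
        ∃ i : Fin n, v = eB n i ∨ v = -eB n i}

/-- The positive system `Δ⁺ = {eᵢ ± eⱼ : i < j} ∪ {eᵢ}`. -/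
def DeltaBpos (n : ℕ) : Set (EucB n) :=
  {v | (∃ i j : Fin n, i < j ∧ (v = eB n i + eB n j ∨ v = eB n i - eB n j)) ∨
        ∃ i : Fin n, v = eB n i}

/-- The coroot `α∨ = 2α/⟪α,α⟫`. -/
def corootB (n : ℕ) (α : EucB n) : EucB n := (2 / ⟪α, α⟫) • α

/-- The linear functional `x ↦ ⟪x, α∨⟫`. -/
def corootForm (n : ℕ) (α : EucB n) : Module.Dual ℝ (EucB n) where
  toFun x := ⟪x, corootB n α⟫
  map_add' x y := inner_add_left _ _ _
  map_smul' c x := by simpa using real_inner_smul_left x (corootB n α) c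

/-- The reflection `s_α(x) = x − ⟪x, α∨⟫ α` as a linear automorphism of `ℝⁿ`
(for `α` a root, the branch condition `⟪α, α∨⟫ = 2` holds). -/
def sReflB (n : ℕ) (α : EucB n) : EucB n ≃ₗ[ℝ] EucB n :=
  if h : corootForm n α α = 2 then Module.reflection h else LinearEquiv.refl ℝ (EucB n)

/-- The Weyl group `W(Bₙ)`, the subgroup of linear automorphisms of `ℝⁿ` generated by the
reflections in the roots of `Δ`. -/
def WeylB (n : ℕ) : Subgroup (EucB n ≃ₗ[ℝ] EucB n) :=
  Subgroup.closure {g | ∃ α ∈ DeltaB n, g = sReflB n α}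


/-- `ρ_i(φ)`: half the sum of the imaginary roots of `θ` that are positive with
respect to `φ`. -/
def rhoI (n : ℕ) (θ : EucB n ≃ₗ[ℝ] EucB n) (φ : EucB n) : EucB n :=
  (1 / 2 : ℝ) • ∑ᶠ α ∈ {α | α ∈ DeltaB n ∧ θ α = α ∧ 0 < ⟪α, φ⟫}, α

/-- `ρ_{ic}(φ)`: half the sum of the compact (`ε α = 0`) imaginary roots of `θ` that are
positive with respect to `φ`. -/
def rhoIC (n : ℕ) (θ : EucB n ≃ₗ[ℝ] EucB n) (ε : EucB n → ZMod 2) (φ : EucB n) : EucB n :=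
  (1 / 2 : ℝ) • ∑ᶠ α ∈ {α | α ∈ DeltaB n ∧ θ α = α ∧ ε α = 0 ∧ 0 < ⟪α, φ⟫}, α

section HalfSum

variable {K V : Type*} [Field K] [LinearOrder K] [IsStrictOrderedRing K] [AddCommGroup V]
  [Module K V]

/-- Half the sum of the elements of `S` on which the functional `f` is positive. For `S` a root
system and `f` regular this is the usual `ρ`; being a `finsum`, it is junk for infinite sums. -/
def halfSumPos (S : Set V) (f : Module.Dual K V) : V :=
  (1 / 2 : K) • ∑ᶠ v ∈ {v ∈ S | 0 < f v}, v

variable {S : Set V} {f g : Module.Dual K V}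

theorem bijOn_neg_pos_sdiff_pos (hneg : ∀ v ∈ S, -v ∈ S) (hf : ∀ v ∈ S, f v ≠ 0)
    (hg : ∀ v ∈ S, g v ≠ 0) :
    Set.BijOn (fun v ↦ -v) ({v ∈ S | 0 < f v} \ {v ∈ S | 0 < g v})
      ({v ∈ S | 0 < g v} \ {v ∈ S | 0 < f v}) := by
  have mapsTo {f g : Module.Dual K V} (hg : ∀ v ∈ S, g v ≠ 0) :
      Set.MapsTo (fun v ↦ -v) ({v ∈ S | 0 < f v} \ {v ∈ S | 0 < g v})
        ({v ∈ S | 0 < g v} \ {v ∈ S | 0 < f v}) := by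
    rintro v ⟨⟨hv, hfv⟩, hgv⟩
    have hgv' : g v < 0 := (hg v hv).lt_of_le (not_lt.1 fun h ↦ hgv ⟨hv, h⟩)
    exact ⟨⟨hneg v hv, by simpa using hgv'⟩, fun h ↦ hfv.not_gt (by simpa using h.2)⟩
  exact Set.InvOn.bijOn ⟨fun v _ ↦ neg_neg v, fun v _ ↦ neg_neg v⟩ (mapsTo hg) (mapsTo hf)

theorem halfSumPos_sub_halfSumPos (hS : S.Finite) (hneg : ∀ v ∈ S, -v ∈ S)
    (hf : ∀ v ∈ S, f v ≠ 0) (hg : ∀ v ∈ S, g v ≠ 0) :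
    halfSumPos S f - halfSumPos S g = ∑ᶠ v ∈ {v ∈ S | 0 < f v} \ {v ∈ S | 0 < g v}, v := by
  set P := {v ∈ S | 0 < f v}
  set Q := {v ∈ S | 0 < g v}
  have hPfin : P.Finite := hS.subset (Set.sep_subset _ _)
  have hQfin : Q.Finite := hS.subset (Set.sep_subset _ _)
  have hswap : ∑ᶠ v ∈ Q \ P, v = -∑ᶠ v ∈ P \ Q, v := by
    rw [← finsum_mem_neg_distrib _ hPfin.sdiff]
    exact (finsum_mem_eq_of_bijOn _ (bijOn_neg_pos_sdiff_pos hneg hf hg) fun _ _ ↦ rfl).symm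
  calc halfSumPos S f - halfSumPos S g
      = (1 / 2 : K) • (∑ᶠ v ∈ P, v - ∑ᶠ v ∈ Q, v) := (smul_sub _ _ _).symm
    _ = (1 / 2 : K) • ((2 : K) • ∑ᶠ v ∈ P \ Q, v) := by
      rw [← finsum_mem_inter_add_sdiff Q hPfin, ← finsum_mem_inter_add_sdiff P hQfin, hswap,
        Set.inter_comm Q P, two_smul]
      abel_nf
    _ = ∑ᶠ v ∈ P \ Q, v := by rw [smul_smul, one_div_mul_cancel two_ne_zero, one_smul]

theorem halfSumPos_sub_halfSumPos_mem_span (hS : S.Finite) (hneg : ∀ v ∈ S, -v ∈ S)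
    (hf : ∀ v ∈ S, f v ≠ 0) (hg : ∀ v ∈ S, g v ≠ 0) :
    halfSumPos S f - halfSumPos S g ∈ Submodule.span ℤ S := by
  rw [halfSumPos_sub_halfSumPos hS hneg hf hg]
  exact finsum_mem_induction (· ∈ Submodule.span ℤ S) (zero_mem _) (fun _ _ ↦ add_mem)
    fun v hv ↦ Submodule.subset_span hv.1.1

end HalfSum

section ShortIntegerVectors

variable {ι : Type*} [Fintype ι] [DecidableEq ι]

theorem exists_eq_single_unit_add {z : ι → ℤ} (hz : z ≠ 0) (hle : ∑ i, z i ^ 2 ≤ 2) :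
    ∃ (i : ι) (a : ℤˣ) (w : ι → ℤ),
      z = Pi.single i (a : ℤ) + w ∧ w i = 0 ∧ ∑ j, w j ^ 2 = ∑ j, z j ^ 2 - 1 := by
  obtain ⟨i, hi⟩ : ∃ i, z i ≠ 0 := Function.ne_iff.1 hz
  have hi_sq_le : z i ^ 2 ≤ 2 :=
    (Finset.single_le_sum (fun j _ ↦ sq_nonneg (z j)) (Finset.mem_univ i)).trans hle
  have hunit : IsUnit (z i) := by
    have hi_ge_neg_one : -1 ≤ z i := by nlinarith
    have hi_le_one : z i ≤ 1 := by nlinarith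
    exact Int.isUnit_iff.2 (by omega)
  obtain ⟨a, ha⟩ := hunit
  refine ⟨i, a, Function.update z i 0, ?_, by simp, ?_⟩
  · ext j
    rcases eq_or_ne j i with rfl | hj <;> simp [*]
  · have hsq : z i ^ 2 = 1 := by rw [← ha, ← Units.val_pow_eq_pow_val, Int.units_sq, Units.val_one]
    have hcongr : ∑ j ∈ Finset.univ.erase i, Function.update z i 0 j ^ 2 =
        ∑ j ∈ Finset.univ.erase i, z j ^ 2 :=
      Finset.sum_congr rfl fun j hj ↦ by rw [Function.update_of_ne (Finset.ne_of_mem_erase hj)]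
    rw [← Finset.add_sum_erase _ _ (Finset.mem_univ i), hcongr,
      ← Finset.add_sum_erase Finset.univ (fun j ↦ z j ^ 2) (Finset.mem_univ i), hsq]
    simp

theorem eq_single_unit_or_eq_single_add_single {z : ι → ℤ} (hz : z ≠ 0)
    (hle : ∑ i, z i ^ 2 ≤ 2) :
    (∃ (i : ι) (a : ℤˣ), z = Pi.single i (a : ℤ)) ∨
      ∃ (i j : ι) (a b : ℤˣ), i ≠ j ∧ z = Pi.single i (a : ℤ) + Pi.single j (b : ℤ) := by
  obtain ⟨i, a, w, rfl, hwi, hw⟩ := exists_eq_single_unit_add hz hle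
  rcases eq_or_ne w 0 with rfl | hw0
  · exact .inl ⟨i, a, add_zero _⟩
  obtain ⟨j, b, u, rfl, huj, hu⟩ := exists_eq_single_unit_add hw0 (by omega)
  have hu0 : u = 0 := by
    have hsum : ∑ k, u k ^ 2 = 0 :=
      le_antisymm (by omega) (Finset.sum_nonneg fun k _ ↦ sq_nonneg (u k))
    ext k
    exact pow_eq_zero_iff two_ne_zero |>.1 <|
      (Finset.sum_eq_zero_iff_of_nonneg fun k _ ↦ sq_nonneg (u k)).1 hsum k (Finset.mem_univ k)
  refine .inr ⟨i, j, a, b, ?_, by rw [hu0, add_zero]⟩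
  rintro rfl
  simp [huj] at hwi

end ShortIntegerVectors

section RootSystem

variable {n : ℕ} {v w α β φ : EucB n}

/-- The lattice `ℤⁿ ⊆ ℝⁿ`, spanned by Mathlib's standard basis so that the theory of `ℤ`-spans of
bases applies. -/
def integerLatticeB (n : ℕ) : Submodule ℤ (EucB n) :=
  Submodule.span ℤ (Set.range (EuclideanSpace.basisFun (Fin n) ℝ).toBasis)

theorem mem_integerLatticeB_iff : v ∈ integerLatticeB n ↔ ∀ i, ∃ k : ℤ, (k : ℝ) = v i := by
  rw [integerLatticeB, Module.Basis.mem_span_iff_repr_mem]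
  simp

theorem eB_mem_integerLatticeB (i : Fin n) : eB n i ∈ integerLatticeB n :=
  Submodule.subset_span ⟨i, by simp [eB]⟩

theorem exists_int_eq_inner (hv : v ∈ integerLatticeB n) (hw : w ∈ integerLatticeB n) :
    ∃ k : ℤ, (k : ℝ) = ⟪v, w⟫ := by
  choose x hx using mem_integerLatticeB_iff.1 hv
  choose y hy using mem_integerLatticeB_iff.1 hw
  exact ⟨∑ i, y i * x i, by simp [PiLp.inner_apply, hx, hy]⟩

theorem norm_eB (i : Fin n) : ‖eB n i‖ = 1 := by
  simp [eB]

theorem inner_eB_eB_of_ne {i j : Fin n} (hij : i ≠ j) : ⟪eB n i, eB n j⟫ = 0 := by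
  simp [eB, EuclideanSpace.inner_single_left, hij]

theorem mem_integerLatticeB_of_mem_DeltaB (hα : α ∈ DeltaB n) : α ∈ integerLatticeB n := by
  have he := eB_mem_integerLatticeB (n := n)
  rcases hα with ⟨i, j, -, rfl | rfl | rfl | rfl⟩ | ⟨i, rfl | rfl⟩
  exacts [add_mem (he i) (he j), sub_mem (he i) (he j), add_mem (neg_mem (he i)) (he j),
    sub_mem (neg_mem (he i)) (he j), he i, neg_mem (he i)]

theorem norm_sq_of_mem_DeltaB (hα : α ∈ DeltaB n) : ‖α‖ ^ 2 = 1 ∨ ‖α‖ ^ 2 = 2 := by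
  rcases hα with ⟨i, j, hij, hα⟩ | ⟨i, hα⟩
  · right
    rcases hα with rfl | rfl | rfl | rfl <;>
      norm_num [norm_add_sq_real, norm_sub_sq_real, inner_eB_eB_of_ne hij.ne, norm_eB]
  · left
    rcases hα with rfl | rfl <;> simp [norm_eB]

theorem units_smul_eB_mem_DeltaB (i : Fin n) (a : ℤˣ) : (a : ℤ) • eB n i ∈ DeltaB n := by
  rcases Int.units_eq_one_or a with rfl | rfl <;> exact .inr ⟨i, by simp⟩

theorem units_smul_eB_add_units_smul_eB_mem_DeltaB {i j : Fin n} (hij : i ≠ j) (a b : ℤˣ) :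
    (a : ℤ) • eB n i + (b : ℤ) • eB n j ∈ DeltaB n := by
  wlog hlt : i < j generalizing i j a b
  · rw [add_comm]
    exact this hij.symm b a (hij.lt_or_gt.resolve_left hlt)
  refine .inl ⟨i, j, hlt, ?_⟩
  rcases Int.units_eq_one_or a with rfl | rfl <;> rcases Int.units_eq_one_or b with rfl | rfl <;>
    simp [sub_eq_add_neg]

theorem mem_DeltaB_iff : v ∈ DeltaB n ↔ v ∈ integerLatticeB n ∧ (‖v‖ ^ 2 = 1 ∨ ‖v‖ ^ 2 = 2) := by
  refine ⟨fun hv ↦ ⟨mem_integerLatticeB_of_mem_DeltaB hv, norm_sq_of_mem_DeltaB hv⟩, ?_⟩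
  rintro ⟨hv, hnorm⟩
  choose z hz using mem_integerLatticeB_iff.1 hv
  have hsum : ((∑ i, z i ^ 2 : ℤ) : ℝ) = ‖v‖ ^ 2 := by simp [EuclideanSpace.real_norm_sq_eq, hz]
  have hle : ∑ i, z i ^ 2 ≤ 2 := by
    have : ((∑ i, z i ^ 2 : ℤ) : ℝ) ≤ (2 : ℤ) := by rcases hnorm with h | h <;> simp [hsum, h]
    exact_mod_cast this
  have hz0 : z ≠ 0 := by
    rintro rfl
    rcases hnorm with h | h <;> simp [h] at hsum
  rcases eq_single_unit_or_eq_single_add_single hz0 hle with ⟨i, a, rfl⟩ | ⟨i, j, a, b, hij, rfl⟩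
  · convert units_smul_eB_mem_DeltaB i a
    ext k
    simp [← hz, eB, Pi.single_apply]
  · convert units_smul_eB_add_units_smul_eB_mem_DeltaB hij a b
    ext k
    simp [← hz, eB, Pi.single_apply]

theorem finite_DeltaB (n : ℕ) : (DeltaB n).Finite := by
  refine (ZSpan.setFinite_inter (EuclideanSpace.basisFun (Fin n) ℝ).toBasis
    (Metric.isBounded_closedBall (x := 0) (r := 2))).subset fun α hα ↦
      ⟨?_, mem_integerLatticeB_of_mem_DeltaB hα⟩
  have hsq : ‖α‖ ^ 2 ≤ 2 := by
    rcases norm_sq_of_mem_DeltaB hα with h | h <;> simp [h]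
  rw [mem_closedBall_zero_iff]
  nlinarith

theorem neg_mem_DeltaB (hα : α ∈ DeltaB n) : -α ∈ DeltaB n := by
  simpa [mem_DeltaB_iff] using hα

theorem sReflB_apply (α x : EucB n) : sReflB n α x = x - ⟪x, corootB n α⟫ • α := by
  unfold sReflB
  split_ifs with h
  · rfl
  · have hα : α = 0 := by
      by_contra hα
      refine h ?_
      simp [corootForm, corootB, real_inner_smul_right, hα]
    simp [hα]

theorem sReflB_eq_reflection (α x : EucB n) : sReflB n α x = (ℝ ∙ α)ᗮ.reflection x := by
  rw [sReflB_apply, Submodule.reflection_orthogonal_apply, Submodule.reflection_singleton_apply,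
    corootB, real_inner_smul_right, real_inner_self_eq_norm_sq, real_inner_comm]
  simp only [RCLike.ofReal_real_eq_id, id_eq]
  module

theorem inner_sReflB_left (α x y : EucB n) : ⟪sReflB n α x, y⟫ = ⟪x, sReflB n α y⟫ := by
  rw [sReflB_eq_reflection, sReflB_eq_reflection, ← LinearIsometryEquiv.inner_map_map
    (ℝ ∙ α)ᗮ.reflection, Submodule.reflection_reflection]

theorem exists_int_eq_inner_corootB (hβ : β ∈ integerLatticeB n) (hα : α ∈ DeltaB n) :
    ∃ k : ℤ, (k : ℝ) = ⟪β, corootB n α⟫ := by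
  obtain ⟨k, hk⟩ := exists_int_eq_inner hβ (mem_integerLatticeB_of_mem_DeltaB hα)
  rcases norm_sq_of_mem_DeltaB hα with h | h
  · exact ⟨2 * k, by simp [corootB, real_inner_smul_right, h, hk]⟩
  · exact ⟨k, by simp [corootB, h, hk]⟩

theorem sReflB_mem_DeltaB (hα : α ∈ DeltaB n) (hβ : β ∈ DeltaB n) :
    sReflB n α β ∈ DeltaB n := by
  obtain ⟨hβ_int, hβ_norm⟩ := mem_DeltaB_iff.1 hβ
  refine mem_DeltaB_iff.2 ⟨?_, by rwa [sReflB_eq_reflection, LinearIsometryEquiv.norm_map]⟩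
  obtain ⟨k, hk⟩ := exists_int_eq_inner_corootB hβ_int hα
  rw [sReflB_apply, ← hk, Int.cast_smul_eq_zsmul]
  exact sub_mem hβ_int (zsmul_mem (mem_integerLatticeB_of_mem_DeltaB hα) k)

theorem inner_sReflB_ne_zero (hα : α ∈ DeltaB n) (hφ : ∀ β ∈ DeltaB n, ⟪φ, β⟫ ≠ 0) :
    ∀ β ∈ DeltaB n, ⟪sReflB n α φ, β⟫ ≠ 0 := by
  intro β hβ
  rw [inner_sReflB_left]
  exact hφ _ (sReflB_mem_DeltaB hα hβ)

end RootSystem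

section ImaginaryRoots

variable {n : ℕ} {θ : EucB n ≃ₗ[ℝ] EucB n} {ε : EucB n → ZMod 2}

/-- The imaginary roots `Δ_i` of `θ`. -/
def imaginaryRootsB (n : ℕ) (θ : EucB n ≃ₗ[ℝ] EucB n) : Set (EucB n) :=
  {β ∈ DeltaB n | θ β = β}

/-- The compact imaginary roots of `θ` with respect to `ε`, a grading encoded by any function
on `ℝⁿ` extending it. -/
def compactImaginaryRootsB (n : ℕ) (θ : EucB n ≃ₗ[ℝ] EucB n) (ε : EucB n → ZMod 2) :
    Set (EucB n) :=
  {β ∈ imaginaryRootsB n θ | ε β = 0}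

theorem neg_mem_imaginaryRootsB {β : EucB n} (hβ : β ∈ imaginaryRootsB n θ) :
    -β ∈ imaginaryRootsB n θ :=
  ⟨neg_mem_DeltaB hβ.1, by rw [map_neg, hβ.2]⟩

theorem imaginaryRootsB_subset_DeltaB : imaginaryRootsB n θ ⊆ DeltaB n :=
  Set.sep_subset _ _

theorem compactImaginaryRootsB_subset_imaginaryRootsB :
    compactImaginaryRootsB n θ ε ⊆ imaginaryRootsB n θ :=
  Set.sep_subset _ _

theorem rhoI_eq_halfSumPos (φ : EucB n) :
    rhoI n θ φ = halfSumPos (imaginaryRootsB n θ) (innerₗ (EucB n) φ) := by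
  simp [rhoI, halfSumPos, imaginaryRootsB, and_assoc, real_inner_comm φ]

theorem rhoIC_eq_halfSumPos (φ : EucB n) :
    rhoIC n θ ε φ = halfSumPos (compactImaginaryRootsB n θ ε) (innerₗ (EucB n) φ) := by
  simp [rhoIC, halfSumPos, compactImaginaryRootsB, imaginaryRootsB, and_assoc, real_inner_comm φ]

end ImaginaryRoots

theorem rho_difference_in_root_lattice_general {n : ℕ} {θ : EucB n ≃ₗ[ℝ] EucB n}
    {ε : EucB n → ZMod 2} (hε : ∀ β ∈ imaginaryRootsB n θ, ε (-β) = ε β) {φ ψ : EucB n}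
    (hφ : ∀ β ∈ imaginaryRootsB n θ, ⟪φ, β⟫ ≠ 0) (hψ : ∀ β ∈ imaginaryRootsB n θ, ⟪ψ, β⟫ ≠ 0) :
    rhoI n θ φ - rhoI n θ ψ ∈ Submodule.span ℤ (imaginaryRootsB n θ) ∧
    rhoIC n θ ε φ - rhoIC n θ ε ψ ∈ Submodule.span ℤ (compactImaginaryRootsB n θ ε) := by
  have hfin : (imaginaryRootsB n θ).Finite := (finite_DeltaB n).subset imaginaryRootsB_subset_DeltaB
  have hsub := compactImaginaryRootsB_subset_imaginaryRootsB (θ := θ) (ε := ε)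
  rw [rhoI_eq_halfSumPos, rhoI_eq_halfSumPos, rhoIC_eq_halfSumPos, rhoIC_eq_halfSumPos]
  refine ⟨halfSumPos_sub_halfSumPos_mem_span hfin (fun _ ↦ neg_mem_imaginaryRootsB) hφ hψ,
    halfSumPos_sub_halfSumPos_mem_span (hfin.subset hsub) ?_ (fun β hβ ↦ hφ β (hsub hβ))
      fun β hβ ↦ hψ β (hsub hβ)⟩
  exact fun β hβ ↦ ⟨neg_mem_imaginaryRootsB hβ.1, (hε β hβ.1).trans hβ.2⟩

/-- For an involution `θ ∈ W(Bₙ)` with a grading `ε` of its imaginary roots, a regular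
element `φ`, and any root `α ∈ Δ`, both `ρ_i(φ) − ρ_i(s_α φ)` and
`ρ_{ic}(φ) − ρ_{ic}(s_α φ)` are integral linear combinations of roots. -/
theorem rho_difference_in_root_lattice (n : ℕ) (hn : 0 < n)
    (θ : EucB n ≃ₗ[ℝ] EucB n) (hθW : θ ∈ WeylB n) (hθ2 : θ * θ = 1)
    (ε : EucB n → ZMod 2)
    (hε1 : ∀ α, α ∈ DeltaB n → θ α = α → ε (-α) = ε α)
    (hε2 : ∀ α β : EucB n, α ∈ DeltaB n → θ α = α → β ∈ DeltaB n → θ β = β →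
      α + β ∈ DeltaB n → θ (α + β) = α + β → ε (α + β) = ε α + ε β)
    (φ : EucB n) (hreg : ∀ α ∈ DeltaB n, ⟪φ, α⟫ ≠ 0)
    (α : EucB n) (hα : α ∈ DeltaB n) :
    rhoI n θ φ - rhoI n θ (sReflB n α φ) ∈ Submodule.span ℤ (DeltaB n) ∧
    rhoIC n θ ε φ - rhoIC n θ ε (sReflB n α φ) ∈ Submodule.span ℤ (DeltaB n) := by
  refine (rho_difference_in_root_lattice_general (fun β hβ ↦ hε1 β hβ.1 hβ.2)
    (fun β hβ ↦ hreg β hβ.1) fun β hβ ↦ inner_sReflB_ne_zero hα hreg β hβ.1).imp ?_ ?_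
  exacts [(Submodule.span_mono (fun _ h ↦ h.1) ·), (Submodule.span_mono (fun _ h ↦ h.1.1) ·)]
end
end
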